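/- arXiv:math/0304028 — 8 statements merged into one kernel-verified Lean document; each statement's English description precedes it below -/
import Mathlib

section
/- Let $n \geq 1$ and $k \geq 2$ be natural numbers with $k - 1/2 < n$, let $\pi^k_n = \prod_{i=1}^{k-1}(1 - i/n)$ be the probability that $k$ uniformly random samples from a space of size $n$ are all distinct, and let $\mathfrak{p}(k-1,m) = \sum_{i=1}^{k-1} i^m$. Then for every natural number $N \geq 2$, setting $\epsilon^k_n(N) = \frac{(k-\frac12)^{N+1}}{N(N+1)\left(1-\frac{k-1/2}{n}\right)n^N}$, one has $\sum_{m=1}^{N-1} \frac{\mathfrak{p}(k-1,m)}{m n^m} < -\ln(\pi^k_n) < \sum_{m=1}^{N-1} \frac{\mathfrak{p}(k-1,m)}{m n^m} + \epsilon^k_n(N)$. -/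
lemma mid_aux (a : ℝ) (ha : 0 ≤ a) (M : ℕ) :
    2 * a^M ≤ (a+1/2)^M + (a-1/2)^M ∧ ((M:ℝ)+1) * a^M ≤ (a+1/2)^(M+1) - (a-1/2)^(M+1) := by
  induction M with
  | zero => constructor <;> norm_num
  | succ M ih =>
    obtain ⟨h1, h2⟩ := ih
    have hp : 0 ≤ a^M := by positivity
    have hS : (M:ℝ) * a^M ≤ (M+1) * a^M - a^M := by linarith
    have hD : 0 ≤ (a+1/2)^M - (a-1/2)^M := by
      have : |a-1/2| ≤ a+1/2 := abs_le.2 ⟨by linarith, by linarith⟩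
      have h := pow_le_pow_left₀ (abs_nonneg _) this M
      rw [← abs_pow] at h
      linarith [le_abs_self ((a-1/2)^M)]
    have h3 : 2 * a^(M+1) ≤ (a+1/2)^(M+1) + (a-1/2)^(M+1) := by
      rw [pow_succ, pow_succ, pow_succ]
      nlinarith [mul_le_mul_of_nonneg_left h1 ha]
    refine ⟨h3, ?_⟩
    have h4 := mul_le_mul_of_nonneg_left h2 ha
    have e : (a+1/2)^(M+1+1) - (a-1/2)^(M+1+1) = a * ((a+1/2)^(M+1) - (a-1/2)^(M+1)) + 1/2 * ((a+1/2)^(M+1) + (a-1/2)^(M+1)) := by ring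
    rw [e]
    have e2 : (((M+1:ℕ):ℝ)+1) * a^(M+1) = a * (((M:ℝ)+1) * a^M) + a^(M+1) := by push_cast; ring
    rw [e2]; linarith

lemma powsum_aux (N : ℕ) (K : ℕ) :
    ((N:ℝ)+1) * ∑ i ∈ Finset.Icc 1 K, (i:ℝ)^N ≤ ((K:ℝ)+1/2)^(N+1) := by
  induction K with
  | zero => simp
  | succ K ih =>
    rw [Finset.sum_Icc_succ_top (by omega), mul_add]
    have h := (mid_aux ((K+1:ℕ):ℝ) (by positivity) N).2
    have e : ((K+1:ℕ):ℝ) - 1/2 = K + 1/2 := by push_cast; ring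
    rw [e] at h
    linarith

lemma log_aux (x : ℝ) (h0 : 0 < x) (h1 : x < 1) (N : ℕ) (hN : 2 ≤ N) :
    (∑ m ∈ Finset.Icc 1 (N-1), x^m / m) < -Real.log (1-x) ∧
    -Real.log (1-x) ≤ (∑ m ∈ Finset.Icc 1 (N-1), x^m / m) + x^N / (N * (1-x)) := by
  obtain ⟨M, rfl⟩ : ∃ M, N = M + 1 := ⟨N-1, by omega⟩
  have hs := Real.hasSum_pow_div_log_of_abs_lt_one (x := x) (by rw [abs_of_pos h0]; exact h1)
  have e : (∑ m ∈ Finset.Icc 1 (M+1-1), x^m / (m:ℝ)) = ∑ m ∈ Finset.range M, x^(m+1) / ((m:ℝ)+1) := by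
    rw [Nat.add_sub_cancel, Finset.range_eq_Ico, ← Finset.Ico_add_one_right_eq_Icc, ← Finset.sum_Ico_add' _ 0 M 1]
    simp
  rw [e]
  have ht := (hasSum_nat_add_iff' M).2 hs
  have hg := (hasSum_geometric_of_lt_one h0.le h1).mul_left (x^(M+1)/((M+1:ℕ):ℝ))
  constructor
  · have := le_hasSum ht 0 (fun j _ => by positivity)
    have h2 : 0 < x ^ (0 + M + 1) / (((0 + M : ℕ):ℝ) + 1) := by positivity
    linarith
  · have := hasSum_le (fun j => ?_) ht hg
    · have e3 : x^(M+1)/((M+1:ℕ):ℝ) * (1-x)⁻¹ = x^(M+1) / (((M+1:ℕ):ℝ) * (1-x)) := by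
        rw [div_mul_eq_div_div, div_eq_mul_inv _ (1-x)]
      linarith
    · have : x^(j+M+1) = x^(M+1) * x^j := by ring
      rw [this, div_mul_eq_mul_div]
      gcongr
      push_cast; linarith [(Nat.cast_nonneg j : (0:ℝ) ≤ j)]


/-- Theorem 2 (main theorem): arbitrarily exact bounds on `-ln(π^k_n)` via power sums. -/
theorem birthday_log_bounds (n k N : ℕ) (hn : 1 ≤ n) (hk : 2 ≤ k)
    (hkn : (k : ℝ) - 1/2 < n) (hN : 2 ≤ N) :
    (∑ m ∈ Finset.Icc 1 (N-1),
        (∑ i ∈ Finset.Icc 1 (k-1), (i : ℝ)^m) / (m * (n : ℝ)^m))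
      < -Real.log (∏ i ∈ Finset.Icc 1 (k-1), (1 - (i : ℝ)/n)) ∧
    -Real.log (∏ i ∈ Finset.Icc 1 (k-1), (1 - (i : ℝ)/n))
      < (∑ m ∈ Finset.Icc 1 (N-1),
          (∑ i ∈ Finset.Icc 1 (k-1), (i : ℝ)^m) / (m * (n : ℝ)^m))
        + ((k : ℝ) - 1/2)^(N+1) / (N * (N+1) * (1 - ((k : ℝ) - 1/2)/n) * (n : ℝ)^N) := by
  have hnp : (0:ℝ) < n := by exact_mod_cast hn
  have hNp : (0:ℝ) < N := by exact_mod_cast (by omega : 0 < N)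
  have hi : ∀ i ∈ Finset.Icc 1 (k-1), (0:ℝ) < i ∧ (i:ℝ) < k - 1/2 := by
    intro i hi
    rw [Finset.mem_Icc] at hi
    refine ⟨by exact_mod_cast hi.1, ?_⟩
    have : ((i+1:ℕ):ℝ) ≤ k := by exact_mod_cast (by omega : i + 1 ≤ k)
    push_cast at this; linarith
  have hx : ∀ i ∈ Finset.Icc 1 (k-1), (0:ℝ) < (i:ℝ)/n ∧ (i:ℝ)/n < ((k:ℝ)-1/2)/n := by
    intro i h
    obtain ⟨a, b⟩ := hi i h
    exact ⟨by positivity, by gcongr⟩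
  have hc : ((k:ℝ)-1/2)/n < 1 := (div_lt_one hnp).2 hkn
  have hne : (Finset.Icc 1 (k-1)).Nonempty := ⟨1, by rw [Finset.mem_Icc]; omega⟩
  have hlog : -Real.log (∏ i ∈ Finset.Icc 1 (k-1), (1 - (i : ℝ)/n))
      = ∑ i ∈ Finset.Icc 1 (k-1), -Real.log (1 - (i:ℝ)/n) := by
    rw [Real.log_prod, Finset.sum_neg_distrib]
    intro i h
    have := hx i h
    linarith [this.2]
  have hsum : (∑ m ∈ Finset.Icc 1 (N-1),
        (∑ i ∈ Finset.Icc 1 (k-1), (i : ℝ)^m) / (m * (n : ℝ)^m))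
      = ∑ i ∈ Finset.Icc 1 (k-1), ∑ m ∈ Finset.Icc 1 (N-1), ((i:ℝ)/n)^m / m := by
    rw [Finset.sum_comm]
    refine Finset.sum_congr rfl fun m _ => ?_
    rw [Finset.sum_div]
    refine Finset.sum_congr rfl fun i _ => ?_
    rw [div_pow, div_div, mul_comm]
  rw [hlog, hsum]
  constructor
  · exact Finset.sum_lt_sum_of_nonempty hne fun i h =>
      (log_aux _ (hx i h).1 ((hx i h).2.trans hc) N hN).1
  · set c := 1 - ((k:ℝ)-1/2)/n with hcdef
    have hcp : 0 < c := by linarith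
    have step : ∑ i ∈ Finset.Icc 1 (k-1), -Real.log (1 - (i:ℝ)/n)
        < ∑ i ∈ Finset.Icc 1 (k-1), ((∑ m ∈ Finset.Icc 1 (N-1), ((i:ℝ)/n)^m / m)
          + ((i:ℝ)/n)^N / (N * c)) := by
      refine Finset.sum_lt_sum_of_nonempty hne fun i h => ?_
      have h1 := (log_aux _ (hx i h).1 ((hx i h).2.trans hc) N hN).2
      have h2 : ((i:ℝ)/n)^N / (N * (1 - (i:ℝ)/n)) < ((i:ℝ)/n)^N / (N * c) := by
        have := hx i h
        have hpos : 0 < ((i:ℝ)/n)^N := pow_pos this.1 N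
        apply div_lt_div_of_pos_left hpos (by positivity)
        apply mul_lt_mul_of_pos_left _ hNp
        linarith [this.2]
      linarith
    refine step.trans_le ?_
    rw [Finset.sum_add_distrib]
    gcongr
    have hp := powsum_aux N (k-1)
    have ek : ((k-1:ℕ):ℝ) + 1/2 = k - 1/2 := by
      rw [Nat.cast_sub (by omega)]; push_cast; ring
    rw [ek] at hp
    have e1 : ∑ i ∈ Finset.Icc 1 (k-1), ((i:ℝ)/n)^N / (N * c)
        = (((N:ℝ)+1) * ∑ i ∈ Finset.Icc 1 (k-1), (i:ℝ)^N) / (N * (N+1) * c * (n:ℝ)^N) := by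
      rw [Finset.mul_sum, Finset.sum_div]
      refine Finset.sum_congr rfl fun i _ => ?_
      rw [div_pow]
      field_simp
    rw [e1]
    gcongr
end

section
/- For all natural numbers $k \geq 2$ and $m > 1$, $\sum_{i=1}^{k-1} i^m < \frac{(k - \frac12)^{m+1}}{m+1}$. -/
theorem powerSum_aux (x : ℝ) (hx : 0 ≤ x) (n : ℕ) :
    2 * x^n ≤ (x+1/2)^n + (x-1/2)^n ∧ 0 ≤ (x+1/2)^n - (x-1/2)^n ∧
    (n+1) * x^n ≤ (x+1/2)^(n+1) - (x-1/2)^(n+1) := by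
  induction n with
  | zero => norm_num
  | succ n ih =>
    obtain ⟨h1, h2, h3⟩ := ih
    have hp : 0 ≤ x^n := pow_nonneg hx n
    have h4 : 2 * x^(n+1) ≤ (x+1/2)^(n+1) + (x-1/2)^(n+1) := by
      have := mul_le_mul_of_nonneg_left h1 hx
      simp only [pow_succ]
      linarith
    have h5 := mul_le_mul_of_nonneg_left h3 hx
    refine ⟨h4, le_trans (by positivity) h3, ?_⟩
    rw [pow_succ (x+1/2) (n+1), pow_succ (x-1/2) (n+1)]
    push_cast
    have e : x * ((n+1) * x^n) = (n+1) * x^(n+1) := by ring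
    rw [e] at h5
    linarith

theorem powerSum_aux2 (m n : ℕ) :
    ∑ i ∈ Finset.Icc 1 n, (i : ℝ)^m < ((n : ℝ) + 1/2)^(m+1) / (m+1) := by
  induction n with
  | zero => simp; positivity
  | succ n ih =>
    rw [Finset.sum_Icc_succ_top (by omega)]
    have h := (powerSum_aux ((n+1 : ℕ) : ℝ) (by positivity) m).2.2
    have hm : (0:ℝ) < m + 1 := by positivity
    rw [lt_div_iff₀ hm] at ih ⊢
    have e : ((n+1 : ℕ) : ℝ) - 1/2 = n + 1/2 := by push_cast; ring
    rw [e] at h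
    linarith

/-- The power sum bound: `∑_{i=1}^{k-1} i^m < (k - 1/2)^{m+1}/(m+1)` for `m > 1`. -/
theorem powerSum_lt (k m : ℕ) (hk : 2 ≤ k) (hm : 1 < m) :
    ∑ i ∈ Finset.Icc 1 (k-1), (i : ℝ)^m < ((k : ℝ) - 1/2)^(m+1) / (m+1) := by
  have h := powerSum_aux2 m (k-1)
  have e : ((k-1 : ℕ) : ℝ) + 1/2 = k - 1/2 := by
    rw [Nat.cast_sub (by omega)]; push_cast; ring
  rwa [e] at h
end

section
/- Let $n \geq 1$ and $k \geq 2$ be natural numbers with $k - 1/2 < n$, and let $\mathfrak{p}(k-1,m) = \sum_{i=1}^{k-1} i^m$. Then for every natural number $N \geq 2$, $\sum_{m=N}^{\infty} \frac{\mathfrak{p}(k-1,m)}{m n^m} < \frac{(k-\frac12)^{N+1}}{N(N+1)\left(1 - \frac{k - 1/2}{n}\right)n^N}$, where the series on the left converges. -/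
lemma aux_step (x : ℝ) (hx : 1/2 ≤ x) (m : ℕ) :
    (m+1 : ℝ) * x^m ≤ (x+1/2)^(m+1) - (x-1/2)^(m+1) ∧
    2 * x^m ≤ (x+1/2)^m + (x-1/2)^m := by
  induction m with
  | zero => norm_num
  | succ m ih =>
    obtain ⟨h1, h2⟩ := ih
    have hD : (x-1/2)^m ≤ (x+1/2)^m := pow_le_pow_left₀ (by linarith) (by linarith) m
    have hS : 2 * x^(m+1) ≤ (x+1/2)^(m+1) + (x-1/2)^(m+1) := by
      have := mul_le_mul_of_nonneg_left h2 (by linarith : (0:ℝ) ≤ x)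
      have e : (x+1/2)^(m+1) + (x-1/2)^(m+1)
        = x * ((x+1/2)^m + (x-1/2)^m) + ((x+1/2)^m - (x-1/2)^m)/2 := by
        rw [pow_succ, pow_succ]; ring
      rw [e, pow_succ]; linarith
    refine ⟨?_, hS⟩
    have := mul_le_mul_of_nonneg_left h1 (by linarith : (0:ℝ) ≤ x)
    have e : (x+1/2)^(m+1+1) - (x-1/2)^(m+1+1)
      = x * ((x+1/2)^(m+1) - (x-1/2)^(m+1)) + ((x+1/2)^(m+1) + (x-1/2)^(m+1))/2 := by
      rw [pow_succ _ (m+1), pow_succ _ (m+1)]; ring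
    have e2 : ((m+1 : ℕ)+1 : ℝ) * x^(m+1) = x * ((m+1) * x^m) + x^(m+1) := by
      push_cast; ring
    rw [e, e2]; linarith

lemma aux_sum (K m : ℕ) :
    (m+1 : ℝ) * ∑ i ∈ Finset.Icc 1 K, (i : ℝ)^m ≤ ((K:ℝ)+1/2)^(m+1) - (1/2)^(m+1) := by
  induction K with
  | zero => simp
  | succ K ih =>
    rw [Finset.sum_Icc_succ_top (by omega), mul_add]
    have hK : (0:ℝ) ≤ K := Nat.cast_nonneg K
    have h := (aux_step ((K+1 : ℕ) : ℝ) (by push_cast; linarith) m).1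
    have e : ((K+1 : ℕ) : ℝ) - 1/2 = K + 1/2 := by push_cast; ring
    rw [e] at h
    linarith

/-- The tail of the series `∑_m p(k-1,m)/(m nᵐ)` starting at `m = N` converges and is
strictly below `ε^k_n(N)`. -/
theorem tail_powerSum_series_lt (n k N : ℕ) (hn : 1 ≤ n) (hk : 2 ≤ k)
    (hkn : (k : ℝ) - 1/2 < n) (hN : 2 ≤ N) :
    Summable (fun m : ℕ =>
        (∑ i ∈ Finset.Icc 1 (k-1), (i : ℝ)^(N + m)) / ((N + m : ℕ) * (n : ℝ)^(N + m))) ∧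
    (∑' m : ℕ,
        (∑ i ∈ Finset.Icc 1 (k-1), (i : ℝ)^(N + m)) / ((N + m : ℕ) * (n : ℝ)^(N + m)))
      < ((k : ℝ) - 1/2)^(N+1) / (N * (N+1) * (1 - ((k : ℝ) - 1/2)/n) * (n : ℝ)^N) := by
  have hk' : (2:ℝ) ≤ k := by exact_mod_cast hk
  have hn' : (0:ℝ) < n := by exact_mod_cast hn
  have hN' : (2:ℝ) ≤ N := by exact_mod_cast hN
  have hsum : ∀ m : ℕ, (m+1 : ℝ) * ∑ i ∈ Finset.Icc 1 (k-1), (i : ℝ)^m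
      < ((k:ℝ)-1/2)^(m+1) := by
    intro m
    have h := aux_sum (k-1) m
    have e : (((k-1 : ℕ) : ℝ) + 1/2) = k - 1/2 := by
      rw [Nat.cast_sub (by omega)]; push_cast; ring
    rw [e] at h
    have : (0:ℝ) < (1/2)^(m+1) := by positivity
    linarith
  set a : ℝ := (k:ℝ) - 1/2 with ha
  have ha0 : 0 < a := by linarith
  have hr0 : 0 ≤ a / n := by positivity
  have hr1 : a / n < 1 := (div_lt_one hn').2 hkn
  set C : ℝ := a^(N+1) / (N * (N+1) * (n:ℝ)^N) with hC
  have hlt : ∀ m : ℕ, (∑ i ∈ Finset.Icc 1 (k-1), (i : ℝ)^(N + m)) /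
      ((N + m : ℕ) * (n : ℝ)^(N + m)) < C * (a/n)^m := by
    intro m
    have hm : (0:ℝ) ≤ m := Nat.cast_nonneg m
    have h := hsum (N+m)
    have h1 : (∑ i ∈ Finset.Icc 1 (k-1), (i : ℝ)^(N + m)) < a^(N+m+1) / ((N+m:ℕ)+1) := by
      rw [lt_div_iff₀ (by positivity)]; linarith
    have hpos : (0:ℝ) < ((N + m : ℕ) : ℝ) := by push_cast; linarith
    calc _ < (a^(N+m+1) / ((N+m:ℕ)+1)) / ((N + m : ℕ) * (n : ℝ)^(N + m)) :=
          div_lt_div_of_pos_right h1 (by positivity)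
      _ = a^(N+m+1) / (((N+m:ℕ) * ((N+m:ℕ)+1)) * (n:ℝ)^(N+m)) := by
          rw [div_div]; congr 1; ring
      _ ≤ a^(N+m+1) / ((N * (N+1)) * (n:ℝ)^(N+m)) := by
          have : (N:ℝ) ≤ ((N+m:ℕ):ℝ) := by push_cast; linarith
          have : (0:ℝ) < N := by linarith
          gcongr
      _ = C * (a/n)^m := by
          have : (0:ℝ) < N := by linarith
          rw [hC, div_pow, div_mul_div_comm]; congr 1 <;> ring
  have hg : Summable (fun m : ℕ => C * (a/n)^m) :=
    (summable_geometric_of_lt_one hr0 hr1).mul_left C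
  have hf : Summable (fun m : ℕ =>
        (∑ i ∈ Finset.Icc 1 (k-1), (i : ℝ)^(N + m)) / ((N + m : ℕ) * (n : ℝ)^(N + m))) :=
    Summable.of_nonneg_of_le (fun m => by positivity) (fun m => (hlt m).le) hg
  refine ⟨hf, ?_⟩
  have h := Summable.tsum_lt_tsum (i := 0) (fun m => (hlt m).le) (hlt 0) hf hg
  rw [tsum_mul_left, tsum_geometric_of_lt_one hr0 hr1] at h
  refine h.trans_eq ?_
  rw [hC, ← div_eq_mul_inv, div_div]
  congr 1; ring
end

section
/- Let $n \geq 1$ and $k \geq 2$ be natural numbers with $k \leq n$, and let $\pi^k_n = \prod_{i=1}^{k-1}(1 - i/n)$. Then $\frac{(k-1)k}{2n} < -\ln(\pi^k_n) < \frac{(k-1)k}{2n} + \frac{(k-\frac12)^3}{6n^2\left(1 - \frac{k-1/2}{n}\right)}$. -/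
theorem bl_log_bound (x : ℝ) (h0 : 0 ≤ x) (h1 : x < 1) :
    -Real.log (1 - x) - x ≤ (1/(1-x)^2 - 2*x - 1)/6 := by
  have hy : 0 < 1 - x := by linarith
  have hz : 0 < (1-x)⁻¹ := inv_pos.mpr hy
  have hz1 : 1 ≤ (1-x)⁻¹ := (one_le_inv₀ hy).mpr (by linarith)
  have h2 : Real.log (1-x)⁻¹ ≤ Real.sinh (Real.log (1-x)⁻¹) :=
    Real.self_le_sinh_iff.mpr (Real.log_nonneg hz1)
  rw [Real.sinh_log hz, Real.log_inv, inv_inv] at h2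
  set z := (1-x)⁻¹ with hzd
  have hx : 1 / (1-x)^2 = z^2 := by rw [hzd]; field_simp
  rw [hx]
  have hm : z * (1-x) = 1 := inv_mul_cancel₀ hy.ne'
  have h3 : 0 ≤ (1-x) * (z-1)^3 := mul_nonneg hy.le (pow_nonneg (by linarith) 3)
  have h4 : (1-x) * (z-1)^3 = z^2 - 3*z + 3 - (1-x) := by
    linear_combination (z^2 - 3*z+3) * hm
  linarith

theorem bl_step (n j : ℝ) (hj : 0 < j) (hn : j + 1 ≤ n) :
    -Real.log (1 - j/n) - j/n ≤
      (j+1/2)^3 / (6 * n^2 * (1 - (j+1/2)/n)) - (j-1/2)^3 / (6 * n^2 * (1 - (j-1/2)/n)) := by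
  have hn0 : 0 < n := by linarith
  refine (bl_log_bound (j/n) (by positivity) (by rw [div_lt_one hn0]; linarith)).trans ?_
  have e1 : 1 - j/n = (n-j)/n := by field_simp
  have key : ∀ a : ℝ, a < n → a^3 / (6 * n^2 * (1 - a/n)) = (-a^2/n - a - n + n^2/(n-a))/6 := by
    intro a ha
    have h1 : n - a ≠ 0 := by linarith
    have h2 : 1 - a/n = (n-a)/n := by field_simp
    rw [h2]
    field_simp
    ring
  rw [key _ (by linarith), key _ (by linarith), e1]
  have ha : 0 < n - (j+1/2) := by linarith
  have hb : 0 < n - (j-1/2) := by linarith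
  have hc : 0 < n - j := by linarith
  have h5 : n^2/(n-(j+1/2)) - n^2/(n-(j-1/2)) = n^2/((n-(j+1/2))*(n-(j-1/2))) := by
    rw [div_sub_div _ _ ha.ne' hb.ne']
    congr 1
    ring
  have h6 : n^2/(n-j)^2 ≤ n^2/((n-(j+1/2))*(n-(j-1/2))) := by
    apply div_le_div_of_nonneg_left (by positivity) (by positivity)
    nlinarith
  have h7 : 1/((n-j)/n)^2 = n^2/(n-j)^2 := by field_simp
  have h8 : -(j+1/2)^2/n + (j-1/2)^2/n = -2*(j/n) := by field_simp; ring
  have h9 : -(j-1/2)^2/n = -((j-1/2)^2/n) := by ring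
  rw [h7]
  linarith

theorem bl_pos (n m : ℕ) (h : m + 1 ≤ n) : 0 < ∏ i ∈ Finset.Icc 1 m, (1 - (i : ℝ)/n) := by
  apply Finset.prod_pos
  intro i hi
  have hi := (Finset.mem_Icc.mp hi).2
  have : (i:ℝ) < n := by exact_mod_cast (by omega : i < n)
  have h0 : (0:ℝ) < n := by exact_mod_cast (by omega : 0 < n)
  rw [sub_pos, div_lt_one h0]; exact this

theorem bl_succ (n m : ℕ) (h : m + 2 ≤ n) :
    -Real.log (∏ i ∈ Finset.Icc 1 (m+1), (1 - (i : ℝ)/n)) =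
    -Real.log (∏ i ∈ Finset.Icc 1 m, (1 - (i : ℝ)/n)) - Real.log (1 - ((m:ℝ)+1)/n) := by
  have h1 := bl_pos n (m+1) h
  have h2 := bl_pos n m (by omega)
  rw [Finset.prod_Icc_succ_top (by omega)] at h1 ⊢
  rw [Real.log_mul h2.ne' (pos_of_mul_pos_right h1 h2.le).ne']
  push_cast
  ring

theorem bl_lstep (n m : ℕ) (h : m + 2 ≤ n) :
    ((m:ℝ)+1)/n < - Real.log (1 - ((m:ℝ)+1)/n) := by
  have h0 : (0:ℝ) < n := by exact_mod_cast (by omega : 0 < n)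
  have h1 : (m:ℝ)+1 < n := by exact_mod_cast (by omega : m+1 < n)
  have hp : 0 < ((m:ℝ)+1)/n := by positivity
  have := Real.log_lt_sub_one_of_pos (x := 1 - ((m:ℝ)+1)/n)
    (by rw [sub_pos, div_lt_one h0]; exact h1) (by linarith)
  linarith

theorem bl_lower (n m : ℕ) (h : m + 1 ≤ n) :
    (m:ℝ) * (m+1) / (2*n) ≤ -Real.log (∏ i ∈ Finset.Icc 1 m, (1 - (i : ℝ)/n)) := by
  induction m with
  | zero => simp
  | succ m ih =>
    have ih := ih (by omega)
    rw [bl_succ n m h]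
    have := bl_lstep n m h
    have h0 : (0:ℝ) < n := by exact_mod_cast (by omega : 0 < n)
    have e : ((m+1:ℕ):ℝ) * ((m+1:ℕ)+1) / (2*n) = (m:ℝ) * (m+1) / (2*n) + ((m:ℝ)+1)/n := by
      push_cast; field_simp; ring
    rw [e]; linarith

theorem bl_upper (n m : ℕ) (h : m + 1 ≤ n) :
    -Real.log (∏ i ∈ Finset.Icc 1 m, (1 - (i : ℝ)/n)) < (m:ℝ) * (m+1) / (2*n) +
      ((m:ℝ)+1/2)^3 / (6 * (n:ℝ)^2 * (1 - ((m:ℝ)+1/2)/n)) := by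
  have h0 : (1:ℝ) ≤ n := by exact_mod_cast (by omega : 1 ≤ n)
  induction m with
  | zero =>
    have : 0 < 1 - (1/2:ℝ)/n := by
      rw [sub_pos, div_lt_one (by linarith)]; linarith
    simp only [Nat.cast_zero, zero_add, zero_mul, zero_div]
    simp only [Finset.Icc_eq_empty_of_lt zero_lt_one, Finset.prod_empty, Real.log_one, neg_zero]
    positivity
  | succ m ih =>
    have ih := ih (by omega)
    rw [bl_succ n m h]
    have := bl_step n ((m:ℝ)+1) (by positivity) (by exact_mod_cast h)
    have e : ((m+1:ℕ):ℝ) * ((m+1:ℕ)+1) / (2*n) = (m:ℝ) * (m+1) / (2*n) + ((m:ℝ)+1)/n := by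
      push_cast; field_simp; ring
    have e2 : (m:ℝ)+1-1/2 = m+1/2 := by ring
    rw [e2] at this
    rw [e]; push_cast; linarith

/-- The `N = 2` case of the main theorem. -/
theorem birthday_log_bounds_N2 (n k : ℕ) (hn : 1 ≤ n) (hk : 2 ≤ k) (hkn : k ≤ n) :
    ((k : ℝ) - 1) * k / (2 * n)
      < -Real.log (∏ i ∈ Finset.Icc 1 (k-1), (1 - (i : ℝ)/n)) ∧
    -Real.log (∏ i ∈ Finset.Icc 1 (k-1), (1 - (i : ℝ)/n))
      < ((k : ℝ) - 1) * k / (2 * n)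
        + ((k : ℝ) - 1/2)^3 / (6 * (n : ℝ)^2 * (1 - ((k : ℝ) - 1/2)/n)) := by
  obtain ⟨m, rfl⟩ : ∃ m, k = m + 2 := ⟨k - 2, by omega⟩
  have h0 : (0:ℝ) < n := by exact_mod_cast hn
  have hs : m + 2 - 1 = m + 1 := by omega
  rw [hs]
  constructor
  · rw [bl_succ n m hkn]
    have h1 := bl_lower n m (by omega)
    have h2 := bl_lstep n m hkn
    have e : (((m+2:ℕ):ℝ) - 1) * ((m+2:ℕ):ℝ) / (2*n)
        = (m:ℝ) * (m+1) / (2*n) + ((m:ℝ)+1)/n := by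
      push_cast; field_simp; ring
    rw [e]; linarith
  · have h1 := bl_upper n (m+1) hkn
    have e1 : ((m+2:ℕ):ℝ) - 1 = ((m+1:ℕ):ℝ) := by push_cast; ring
    have e2 : ((m+2:ℕ):ℝ) - 1/2 = ((m+1:ℕ):ℝ) + 1/2 := by push_cast; ring
    have e3 : ((m+2:ℕ):ℝ) = ((m+1:ℕ):ℝ) + 1 := by push_cast; ring
    rw [e1, e2, e3]
    exact h1
end

section
/- Let $n \geq 1$ and $k \geq 2$ be natural numbers with $k \leq n$ and $k < \sqrt{n}$, let $\pi^k_n = \prod_{i=1}^{k-1}(1 - i/n)$, and let $\beta^k_n = 1 - \pi^k_n$. Then $\frac{(k-1)k}{2n} - \frac{(k-1)^2 k^2}{4n^2} < \beta^k_n < \frac{(k-1)k}{2n} + \frac{(k-\frac12)^3}{6n^2\left(1-\frac{k-1/2}{n}\right)}$. -/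
theorem bday_aux (n : ℕ) (hn : 1 ≤ n) (m : ℕ) (hm : m ≤ n) :
    0 ≤ ∏ i ∈ Finset.Icc 1 m, (1 - (i : ℝ)/n) ∧
    ∏ i ∈ Finset.Icc 1 m, (1 - (i : ℝ)/n) ≤ 1 ∧
    1 - (m : ℝ) * (m + 1) / (2 * n) ≤ ∏ i ∈ Finset.Icc 1 m, (1 - (i : ℝ)/n) ∧
    ∏ i ∈ Finset.Icc 1 m, (1 - (i : ℝ)/n) ≤
      1 - (m : ℝ) * (m + 1) / (2 * n) + ((m : ℝ) * (m + 1) / (2 * n))^2 / 2 := by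
  have hn0 : (0 : ℝ) < n := by exact_mod_cast hn
  induction m with
  | zero => simp
  | succ m ih =>
    obtain ⟨h0, h1, h2, h3⟩ := ih (by omega)
    rw [Finset.prod_Icc_succ_top (by omega)]
    set P := ∏ i ∈ Finset.Icc 1 m, (1 - (i : ℝ)/n)
    have hx0 : 0 ≤ ((m + 1 : ℕ) : ℝ) / n := by positivity
    have hx1 : ((m + 1 : ℕ) : ℝ) / n ≤ 1 := by
      rw [div_le_one hn0]; exact_mod_cast hm
    have hs : ((m + 1 : ℕ) : ℝ) * (((m + 1 : ℕ) : ℝ) + 1) / (2 * n)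
        = (m : ℝ) * (m + 1) / (2 * n) + ((m + 1 : ℕ) : ℝ) / n := by
      push_cast; field_simp; ring
    rw [hs]
    set x := ((m + 1 : ℕ) : ℝ) / n
    set s := (m : ℝ) * (m + 1) / (2 * n)
    refine ⟨mul_nonneg h0 (by linarith), by nlinarith, by nlinarith, ?_⟩
    have := mul_le_mul_of_nonneg_right h3 (sub_nonneg.2 hx1)
    nlinarith [mul_nonneg (sq_nonneg s) hx0, sq_nonneg x]


/-- The `M = 1` case (Equation (3)): explicit bounds on `β^k_n` for `k < √n`. -/
theorem birthday_prob_bounds_M1 (n k : ℕ) (hn : 1 ≤ n) (hk : 2 ≤ k) (hkn : k ≤ n)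
    (hsqrt : (k : ℝ) < Real.sqrt n) :
    ((k : ℝ) - 1) * k / (2 * n) - ((k : ℝ) - 1)^2 * (k : ℝ)^2 / (4 * (n : ℝ)^2)
      < 1 - ∏ i ∈ Finset.Icc 1 (k-1), (1 - (i : ℝ)/n) ∧
    1 - ∏ i ∈ Finset.Icc 1 (k-1), (1 - (i : ℝ)/n)
      < ((k : ℝ) - 1) * k / (2 * n)
        + ((k : ℝ) - 1/2)^3 / (6 * (n : ℝ)^2 * (1 - ((k : ℝ) - 1/2)/n)) := by

  have hn0 : (0 : ℝ) < n := by exact_mod_cast hn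
  have hk2 : (2 : ℝ) ≤ k := by exact_mod_cast hk
  have hkn' : (k : ℝ) ≤ n := by exact_mod_cast hkn
  obtain ⟨-, -, h2, h3⟩ := bday_aux n hn (k - 1) (by omega)
  have hc : ((k - 1 : ℕ) : ℝ) = (k : ℝ) - 1 := by
    rw [Nat.cast_sub (by omega)]; simp
  rw [hc, sub_add_cancel] at h2 h3
  constructor
  · have e : ((k : ℝ) - 1)^2 * (k : ℝ)^2 / (4 * (n : ℝ)^2)
        = (((k : ℝ) - 1) * k / (2 * n))^2 := by
      field_simp; ring
    have hs : 0 < ((k : ℝ) - 1) * k / (2 * n) := by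
      have : 0 < (k : ℝ) - 1 := by linarith
      positivity
    rw [e]
    have := pow_pos hs 2
    linarith
  · have h1 : 0 < 1 - ((k : ℝ) - 1/2)/n := by
      rw [sub_pos, div_lt_one hn0]; linarith
    have h4 : 0 < (k : ℝ) - 1/2 := by linarith
    have : 0 < ((k : ℝ) - 1/2)^3 / (6 * (n : ℝ)^2 * (1 - ((k : ℝ) - 1/2)/n)) := by
      apply div_pos (pow_pos h4 3)
      exact mul_pos (by positivity) h1
    linarith
end

section
/- Let $n \geq 1$ and $k \geq 1$ be natural numbers with $k \leq n$, let $\pi^k_n = \prod_{i=1}^{k-1}(1 - i/n)$, and let $\mathfrak{p}(k-1,m) = \sum_{i=1}^{k-1} i^m$. Then the series $\sum_{m=1}^{\infty} \frac{\mathfrak{p}(k-1,m)}{m n^m}$ converges and equals $-\ln(\pi^k_n)$. -/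
/-- Equation (1): the series `∑_{m=1}^∞ p(k-1,m)/(m nᵐ)` converges to `-ln(π^k_n)`. -/
theorem log_birthday_series (n k : ℕ) (hn : 1 ≤ n) (hk : 1 ≤ k) (hkn : k ≤ n) :
    HasSum (fun m : ℕ =>
        (∑ i ∈ Finset.Icc 1 (k-1), (i : ℝ)^(m+1)) / ((m+1 : ℕ) * (n : ℝ)^(m+1)))
      (-Real.log (∏ i ∈ Finset.Icc 1 (k-1), (1 - (i : ℝ)/n))) := by
  have hn0 : (0 : ℝ) < n := by exact_mod_cast hn
  have hlt : ∀ i ∈ Finset.Icc 1 (k-1), (i : ℝ)/n < 1 := by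
    intro i hi
    rw [Finset.mem_Icc] at hi
    rw [div_lt_one hn0]
    have h : i < n := by omega
    exact_mod_cast h
  rw [Real.log_prod (fun i hi => by have := hlt i hi; linarith), ← Finset.sum_neg_distrib]
  have key : HasSum (fun m : ℕ => ∑ i ∈ Finset.Icc 1 (k-1), ((i : ℝ)/n)^(m+1) / ((m : ℝ)+1))
      (∑ i ∈ Finset.Icc 1 (k-1), -Real.log (1 - (i : ℝ)/n)) := by
    apply hasSum_sum
    intro i hi
    apply Real.hasSum_pow_div_log_of_abs_lt_one
    rw [abs_of_nonneg (by positivity)]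
    exact hlt i hi
  have e : (fun m : ℕ =>
        (∑ i ∈ Finset.Icc 1 (k-1), (i : ℝ)^(m+1)) / ((m+1 : ℕ) * (n : ℝ)^(m+1))) =
      (fun m : ℕ => ∑ i ∈ Finset.Icc 1 (k-1), ((i : ℝ)/n)^(m+1) / ((m : ℝ)+1)) := by
    funext m
    rw [Finset.sum_div]
    refine Finset.sum_congr rfl fun i _ => ?_
    rw [div_pow, div_div, mul_comm]
    push_cast
    rfl
  rw [e]
  exact key
end

section
/- Let $n \geq 1$ and $1 \leq k \leq n$ be natural numbers, and fix an element $x$ of an $n$-element set $S$. The number of functions $f : S \to S$ such that the orbit $\{f^j(x) : j \geq 0\}$ of $x$ under $f$ has size exactly $k$ is $k \cdot n^{n-k} \cdot \prod_{i=1}^{k-1}(n-i)$. Equivalently, for a uniformly random function $f : S \to S$, the probability that the orbit of $x$ under $f$ has size exactly $k$ is $\pi^k_n \cdot \frac{k}{n}$, where $\pi^k_n = \prod_{i=1}^{k-1}(1 - i/n)$. -/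
namespace OrbitCount

/-- The first `k` iterates of `x` are distinct. -/
def Dist {n : ℕ} (x : Fin n) (k : ℕ) (f : Fin n → Fin n) : Prop :=
  ∀ i j, i < j → j < k → f^[i] x ≠ f^[j] x

lemma dist_succ {n : ℕ} (x : Fin n) (k : ℕ) (f : Fin n → Fin n) :
    Dist x (k+1) f ↔ Dist x k f ∧ ∀ j, j < k → f^[j] x ≠ f^[k] x := by
  constructor
  · intro h
    exact ⟨fun i j hij hj => h i j hij (by omega), fun j hj => h j k hj (by omega)⟩
  · rintro ⟨h1, h2⟩ i j hij hj
    rcases Nat.lt_succ_iff_lt_or_eq.mp hj with h | h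
    · exact h1 i j hij h
    · subst h; exact h2 i hij

lemma dist_inj {n : ℕ} {x : Fin n} {k : ℕ} {f : Fin n → Fin n} (h : Dist x k f) :
    Set.InjOn (fun j => f^[j] x) (Finset.range k : Set ℕ) := by
  intro i hi j hj hij
  simp only [Finset.coe_range, Set.mem_Iio] at hi hj
  rcases lt_trichotomy i j with h' | h' | h'
  · exact absurd hij (h i j h' hj)
  · exact h'
  · exact absurd hij.symm (h j i h' hi)

lemma orbit_ge {n : ℕ} (x : Fin n) (k : ℕ) (f : Fin n → Fin n) :
    k ≤ Set.ncard {y : Fin n | ∃ j : ℕ, f^[j] x = y} ↔ Dist x k f := by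
  constructor
  · intro h i j hij hj he
    have hsub : {y : Fin n | ∃ j : ℕ, f^[j] x = y} ⊆
        (((Finset.range j).image (fun j => f^[j] x) : Finset (Fin n)) : Set (Fin n)) := by
      rintro y ⟨m, rfl⟩
      induction m using Nat.strong_induction_on with
      | _ m ih =>
        by_cases hm : m < j
        · simp only [Finset.coe_image, Finset.coe_range]
          exact ⟨m, hm, rfl⟩
        · have : f^[m] x = f^[m - j + i] x := by
            rw [Function.iterate_add_apply, he, ← Function.iterate_add_apply]
            congr 2; omega
          rw [this]
          exact ih _ (by omega)
    have h1 := Set.ncard_le_ncard hsub (Set.toFinite _)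
    rw [Set.ncard_coe_finset] at h1
    have h2 := Finset.card_image_le (s := Finset.range j) (f := fun j => f^[j] x)
    rw [Finset.card_range] at h2
    omega
  · intro h
    have hsub : (((Finset.range k).image (fun j => f^[j] x) : Finset (Fin n)) : Set (Fin n)) ⊆
        {y : Fin n | ∃ j : ℕ, f^[j] x = y} := by
      intro y hy
      simp only [Finset.coe_image, Finset.coe_range] at hy
      obtain ⟨m, _, rfl⟩ := hy
      exact ⟨m, rfl⟩
    have h1 := Set.ncard_le_ncard hsub (Set.toFinite _)
    rw [Set.ncard_coe_finset, Finset.card_image_of_injOn (dist_inj h), Finset.card_range] at h1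
    exact h1

lemma iter_update {n : ℕ} {x : Fin n} {m : ℕ} {f : Fin n → Fin n} (h : Dist x (m+1) f)
    (y : Fin n) : ∀ j, j ≤ m → (Function.update f (f^[m] x) y)^[j] x = f^[j] x := by
  intro j
  induction j with
  | zero => intro _; rfl
  | succ j ih =>
    intro hj
    rw [Function.iterate_succ_apply', ih (by omega), Function.iterate_succ_apply',
      Function.update_of_ne (h j m (by omega) (by omega))]

lemma dist_update {n : ℕ} {x : Fin n} {m : ℕ} {f : Fin n → Fin n} (h : Dist x (m+1) f)
    (y : Fin n) : Dist x (m+1) (Function.update f (f^[m] x) y) := by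
  intro i j hij hj
  rw [iter_update h y i (by omega), iter_update h y j (by omega)]
  exact h i j hij hj

open Classical in
/-- The finset of functions whose first `k` iterates of `x` are distinct. -/
noncomputable def DS {n : ℕ} (x : Fin n) (k : ℕ) : Finset (Fin n → Fin n) :=
  Finset.univ.filter (Dist x k)

lemma mem_DS {n : ℕ} {x : Fin n} {k : ℕ} {f : Fin n → Fin n} : f ∈ DS x k ↔ Dist x k f := by
  simp [DS]

lemma card_rec {n : ℕ} (x : Fin n) (m : ℕ) :
    (DS x (m+2)).card * n = (DS x (m+1)).card * (n - (m+1)) := by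
  have e1 : ((DS x (m+1)).sigma (fun f =>
      ((Finset.range (m+1)).image (fun j => f^[j] x))ᶜ)).card
      = (DS x (m+1)).card * (n - (m+1)) := by
    rw [Finset.card_sigma, Finset.sum_const_nat]
    intro f hf
    rw [Finset.card_compl, Finset.card_image_of_injOn (dist_inj (mem_DS.mp hf)),
      Finset.card_range, Fintype.card_fin]
  have e2 : ((DS x (m+2)).sigma (fun _ => (Finset.univ : Finset (Fin n)))).card
      = (DS x (m+2)).card * n := by
    simp
  rw [← e1, ← e2]
  have inv : ∀ (f : Fin n → Fin n) (y : Fin n), Dist x (m+1) f →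
      (⟨Function.update (Function.update f (f^[m] x) y)
          ((Function.update f (f^[m] x) y)^[m] x) (f (f^[m] x)),
        (Function.update f (f^[m] x) y) ((Function.update f (f^[m] x) y)^[m] x)⟩ :
          Σ _ : Fin n → Fin n, Fin n) = ⟨f, y⟩ := by
    intro f y h
    rw [iter_update h y m le_rfl]
    simp
  refine Finset.card_nbij' (fun p => ⟨Function.update p.1 (p.1^[m] x) p.2, p.1 (p.1^[m] x)⟩)
    (fun p => ⟨Function.update p.1 (p.1^[m] x) p.2, p.1 (p.1^[m] x)⟩) ?_ ?_ ?_ ?_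
  · rintro ⟨f, y⟩ hp
    simp only [Finset.coe_sigma, Set.mem_sigma_iff, Finset.mem_coe, mem_DS] at hp ⊢
    obtain ⟨h1, h2⟩ := (dist_succ x (m+1) f).mp hp.1
    refine ⟨dist_update h1 y, ?_⟩
    simp only [Finset.mem_compl, Finset.mem_image, Finset.mem_range, not_exists, not_and]
    intro j hj
    rw [iter_update h1 y j (by omega), ← Function.iterate_succ_apply' f]
    exact h2 j hj
  · rintro ⟨f, z⟩ hp
    simp only [Finset.coe_sigma, Set.mem_sigma_iff, Finset.mem_coe, mem_DS, Finset.mem_compl,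
      Finset.mem_image, Finset.mem_range, not_exists, not_and] at hp ⊢
    refine ⟨(dist_succ x (m+1) _).mpr ⟨dist_update hp.1 z, ?_⟩, Finset.mem_univ _⟩
    intro j hj
    rw [iter_update hp.1 z j (by omega), Function.iterate_succ_apply',
      iter_update hp.1 z m le_rfl, Function.update_self]
    exact hp.2 j hj
  · rintro ⟨f, y⟩ hp
    simp only [Finset.coe_sigma, Set.mem_sigma_iff, Finset.mem_coe, mem_DS] at hp
    exact inv f y ((dist_succ x (m+1) f).mp hp.1).1
  · rintro ⟨f, y⟩ hp
    simp only [Finset.coe_sigma, Set.mem_sigma_iff, Finset.mem_coe, mem_DS] at hp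
    exact inv f y hp.1

lemma card_DS {n : ℕ} (x : Fin n) (m : ℕ) (hm : m + 1 ≤ n) :
    (DS x (m+1)).card = n ^ (n - m) * ∏ i ∈ Finset.Icc 1 m, (n - i) := by
  induction m with
  | zero =>
    have : DS x 1 = Finset.univ := by
      ext f
      simp only [mem_DS, Finset.mem_univ, iff_true]
      intro i j hij hj
      omega
    simp [this]
  | succ m ih =>
    have h := card_rec x m
    rw [ih (by omega)] at h
    apply Nat.eq_of_mul_eq_mul_right (show 0 < n by omega)
    rw [h, Finset.prod_Icc_succ_top (by omega), show n - m = n - (m+1) + 1 by omega, pow_succ]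
    ring

lemma main {n : ℕ} (x : Fin n) (m : ℕ) (hm : m + 1 ≤ n) :
    {f : Fin n → Fin n | Set.ncard {y : Fin n | ∃ j : ℕ, f^[j] x = y} = m+1}.ncard
      = (m+1) * n^(n-(m+1)) * ∏ i ∈ Finset.Icc 1 m, (n - i) := by
  have hset : {f : Fin n → Fin n | Set.ncard {y : Fin n | ∃ j : ℕ, f^[j] x = y} = m+1}
      = ((DS x (m+1) \ DS x (m+2) : Finset _) : Set (Fin n → Fin n)) := by
    ext f
    rw [Finset.mem_coe, Finset.mem_sdiff, mem_DS, mem_DS, ← orbit_ge, ← orbit_ge,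
      Set.mem_setOf_eq]
    omega
  have hsub : DS x (m+2) ⊆ DS x (m+1) := fun f hf =>
    mem_DS.mpr ((dist_succ x (m+1) f).mp (mem_DS.mp hf)).1
  rw [hset, Set.ncard_coe_finset, Finset.card_sdiff_of_subset hsub]
  apply Nat.eq_of_mul_eq_mul_right (show 0 < n by omega)
  rw [Nat.sub_mul, card_rec, ← Nat.mul_sub, card_DS x m hm,
    show n - (n - (m+1)) = m+1 by omega, show n - m = n - (m+1) + 1 by omega, pow_succ]
  ring

end OrbitCount


/-- The number of functions `f : S → S` (with `|S| = n`) under which the orbit of a fixed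
point `x` has size exactly `k` is `k · n^{n-k} · ∏_{i=1}^{k-1}(n-i)`; equivalently, the
probability that the orbit of `x` under a uniformly random `f` has size exactly `k`
is `π^k_n · k/n`. -/
theorem orbit_size_eq_count (n k : ℕ) (hn : 1 ≤ n) (hk : 1 ≤ k) (hkn : k ≤ n) (x : Fin n) :
    {f : Fin n → Fin n | Set.ncard {y : Fin n | ∃ j : ℕ, f^[j] x = y} = k}.ncard
      = k * n^(n-k) * ∏ i ∈ Finset.Icc 1 (k-1), (n - i) ∧
    ({f : Fin n → Fin n | Set.ncard {y : Fin n | ∃ j : ℕ, f^[j] x = y} = k}.ncard : ℝ)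
        / (n : ℝ)^n
      = (∏ i ∈ Finset.Icc 1 (k-1), (1 - (i : ℝ)/n)) * (k / n) := by
  obtain ⟨m, rfl⟩ : ∃ m, k = m + 1 := ⟨k - 1, by omega⟩
  have h := OrbitCount.main x m hkn
  simp only [Nat.add_sub_cancel]
  refine ⟨h, ?_⟩
  rw [h]
  have hn0 : (n : ℝ) ≠ 0 := by exact_mod_cast (show n ≠ 0 by omega)
  have hp : ∏ i ∈ Finset.Icc 1 m, (1 - (i : ℝ)/n)
      = ((∏ i ∈ Finset.Icc 1 m, (n - i) : ℕ) : ℝ) / (n : ℝ)^m := by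
    have : (n : ℝ)^m = ∏ i ∈ Finset.Icc 1 m, (n : ℝ) := by simp
    rw [this, Nat.cast_prod, ← Finset.prod_div_distrib]
    refine Finset.prod_congr rfl fun i hi => ?_
    rw [Finset.mem_Icc] at hi
    rw [Nat.cast_sub (by omega)]
    field_simp
  have hpow : (n : ℝ)^n = (n : ℝ)^(n-(m+1)) * (n : ℝ)^m * n := by
    rw [mul_assoc, ← pow_succ, ← pow_add]
    congr 1; omega
  rw [hp, hpow]
  simp only [Nat.cast_mul, Nat.cast_pow]
  field_simp
end

section
/- Let $n \geq 1$ and $1 \leq k \leq n$ be natural numbers, and fix an element $x$ of an $n$-element set $S$. The number of functions $f : S \to S$ such that the first $k$ iterates $x, f(x), \dots, f^{k-1}(x)$ are pairwise distinct (equivalently, the orbit of $x$ under $f$ has size at least $k$) is $n^{n-k+1} \cdot \prod_{i=1}^{k-1}(n-i)$. Equivalently, for a uniformly random function $f : S \to S$, the probability that the orbit of $x$ under $f$ has size at least $k$ is $\pi^k_n = \prod_{i=1}^{k-1}(1 - i/n)$. -/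
open Classical in
/-- functions whose first `k` iterates at `x` are distinct -/
noncomputable def goodFns (n : ℕ) (x : Fin n) (k : ℕ) : Finset (Fin n → Fin n) :=
  Finset.univ.filter (fun f => ∀ i j : ℕ, i < k → j < k → f^[i] x = f^[j] x → i = j)

lemma mem_goodFns {n : ℕ} {x : Fin n} {k : ℕ} {f : Fin n → Fin n} :
    f ∈ goodFns n x k ↔ ∀ i j : ℕ, i < k → j < k → f^[i] x = f^[j] x → i = j := by
  simp [goodFns]

lemma iterate_update_good {n : ℕ} {x : Fin n} {m : ℕ} {f : Fin n → Fin n}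
    (hf : f ∈ goodFns n x (m+1)) (z : Fin n) (i : ℕ) (hi : i ≤ m) :
    (Function.update f (f^[m] x) z)^[i] x = f^[i] x := by
  rw [mem_goodFns] at hf
  induction i with
  | zero => rfl
  | succ i ih =>
    rw [Function.iterate_succ_apply', ih (by omega), Function.iterate_succ_apply',
      Function.update_of_ne]
    intro h
    have := hf i m (by omega) (by omega) h
    omega

lemma update_good {n : ℕ} {x : Fin n} {m : ℕ} {f : Fin n → Fin n}
    (hf : f ∈ goodFns n x (m+1)) (z : Fin n) :
    Function.update f (f^[m] x) z ∈ goodFns n x (m+1) := by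
  have h := iterate_update_good hf z
  rw [mem_goodFns] at hf ⊢
  intro i j hi hj
  rw [h i (by omega), h j (by omega)]
  exact hf i j hi hj

lemma good_succ {n : ℕ} {x : Fin n} {m : ℕ} {f : Fin n → Fin n} :
    f ∈ goodFns n x (m+2) ↔ f ∈ goodFns n x (m+1) ∧ ∀ i < m+1, f^[i] x ≠ f (f^[m] x) := by
  simp only [mem_goodFns, ← Function.iterate_succ_apply']
  constructor
  · intro h
    refine ⟨fun i j hi hj => h i j (by omega) (by omega), fun i hi he => ?_⟩
    have := h i (m+1) (by omega) (by omega) he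
    omega
  · rintro ⟨h1, h2⟩ i j hi hj he
    rcases Nat.lt_succ_iff_lt_or_eq.1 hi with hi | rfl
    · rcases Nat.lt_succ_iff_lt_or_eq.1 hj with hj | rfl
      · exact h1 i j hi hj he
      · exact absurd he (h2 i hi)
    · rcases Nat.lt_succ_iff_lt_or_eq.1 hj with hj | rfl
      · exact absurd he.symm (h2 j hj)
      · rfl

lemma card_good_succ (n : ℕ) (x : Fin n) (m : ℕ) :
    (goodFns n x (m+2)).card * n = (goodFns n x (m+1)).card * (n - (m+1)) := by
  have h1 : (goodFns n x (m+2)).card * n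
      = ((goodFns n x (m+2)).sigma (fun _ => (Finset.univ : Finset (Fin n)))).card := by
    simp [Finset.card_sigma]
  have h2 : (goodFns n x (m+1)).card * (n - (m+1))
      = ((goodFns n x (m+1)).sigma (fun f =>
        ((Finset.range (m+1)).image (fun i => f^[i] x))ᶜ)).card := by
    rw [Finset.card_sigma, Finset.sum_const_nat (m := n - (m+1))]
    intro f hf
    rw [Finset.card_compl, Finset.card_image_of_injOn, Finset.card_range, Fintype.card_fin]
    intro i hi j hj he
    exact mem_goodFns.1 hf i j (by simpa using hi) (by simpa using hj) he
  rw [h1, h2]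
  have inv : ∀ f ∈ goodFns n x (m+1), ∀ z : Fin n,
      (⟨Function.update (Function.update f (f^[m] x) z)
          ((Function.update f (f^[m] x) z)^[m] x) (f (f^[m] x)),
        (Function.update f (f^[m] x) z) ((Function.update f (f^[m] x) z)^[m] x)⟩
        : Σ _ : Fin n → Fin n, Fin n) = ⟨f, z⟩ := by
    intro f hf z
    rw [iterate_update_good hf z m le_rfl]
    simp
  let T : (Σ _ : Fin n → Fin n, Fin n) → (Σ _ : Fin n → Fin n, Fin n) :=
    fun p => ⟨Function.update p.1 (p.1^[m] x) p.2, p.1 (p.1^[m] x)⟩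
  refine Finset.card_nbij' T T ?_ ?_ ?_ ?_
  · rintro ⟨f, z⟩ hp
    simp only [Finset.coe_sigma, Set.mem_sigma_iff, Finset.mem_coe, good_succ] at hp
    obtain ⟨⟨hf, hne⟩, -⟩ := hp
    simp only [T, Finset.coe_sigma, Set.mem_sigma_iff, Finset.mem_coe, Finset.mem_compl,
      Finset.mem_image, Finset.mem_range, not_exists, not_and]
    refine ⟨update_good hf z, fun i hi => ?_⟩
    rw [iterate_update_good hf z i (by omega)]
    exact hne i hi
  · rintro ⟨f, z⟩ hp
    simp only [Finset.coe_sigma, Set.mem_sigma_iff, Finset.mem_coe, Finset.mem_compl,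
      Finset.mem_image, Finset.mem_range, not_exists, not_and] at hp
    obtain ⟨hf, hne⟩ := hp
    simp only [T, Finset.coe_sigma, Set.mem_sigma_iff, Finset.mem_coe, good_succ]
    refine ⟨⟨update_good hf z, fun i hi => ?_⟩, Finset.mem_univ _⟩
    rw [iterate_update_good hf z i (by omega), iterate_update_good hf z m le_rfl,
      Function.update_self]
    exact hne i hi
  · rintro ⟨f, z⟩ hp
    simp only [Finset.coe_sigma, Set.mem_sigma_iff, Finset.mem_coe, good_succ] at hp
    exact inv f hp.1.1 z
  · rintro ⟨f, z⟩ hp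
    simp only [Finset.coe_sigma, Set.mem_sigma_iff, Finset.mem_coe] at hp
    exact inv f hp.1 z

lemma card_good (n : ℕ) (x : Fin n) (m : ℕ) :
    (goodFns n x (m+1)).card * n^m = n^n * ∏ i ∈ Finset.Icc 1 m, (n - i) := by
  induction m with
  | zero =>
    have : goodFns n x (0+1) = Finset.univ := by
      ext f
      simp only [mem_goodFns, Finset.mem_univ, iff_true]
      intros; omega
    simp [this]
  | succ m ih =>
    rw [Finset.prod_Icc_succ_top (by omega), ← mul_assoc, ← ih, pow_succ']
    have := card_good_succ n x m
    calc _ = ((goodFns n x (m+2)).card * n) * n^m := by ring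
      _ = _ := by rw [this]; ring


/-- The number of functions `f : S → S` (with `|S| = n`) under which the first `k` iterates
`x, f(x), …, f^{k-1}(x)` of a fixed point `x` are pairwise distinct is
`n^{n-k+1} · ∏_{i=1}^{k-1}(n-i)`; equivalently, the probability that the orbit of `x` under
a uniformly random `f` has size at least `k` is `π^k_n`. -/
theorem orbit_size_ge_count (n k : ℕ) (hn : 1 ≤ n) (hk : 1 ≤ k) (hkn : k ≤ n) (x : Fin n) :
    {f : Fin n → Fin n | ∀ i j : ℕ, i < k → j < k → f^[i] x = f^[j] x → i = j}.ncard
      = n^(n-k+1) * ∏ i ∈ Finset.Icc 1 (k-1), (n - i) ∧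
    ({f : Fin n → Fin n | ∀ i j : ℕ, i < k → j < k → f^[i] x = f^[j] x → i = j}.ncard : ℝ)
        / (n : ℝ)^n
      = ∏ i ∈ Finset.Icc 1 (k-1), (1 - (i : ℝ)/n) := by
  obtain ⟨m, rfl⟩ : ∃ m, k = m + 1 := ⟨k - 1, by omega⟩
  have hset : {f : Fin n → Fin n | ∀ i j : ℕ, i < m+1 → j < m+1 → f^[i] x = f^[j] x → i = j}
      = (goodFns n x (m+1) : Set (Fin n → Fin n)) := by
    ext f
    simp [mem_goodFns]
  rw [hset, Set.ncard_coe_finset, Nat.add_sub_cancel]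
  have h := card_good n x m
  have hn0 : (n : ℝ) ≠ 0 := by
    have : n ≠ 0 := by omega
    exact_mod_cast this
  constructor
  · apply Nat.eq_of_mul_eq_mul_right (pow_pos hn m)
    have e : n = (n - (m+1) + 1) + m := by omega
    have e2 : n^n = n^(n - (m+1) + 1) * n^m := by
      rw [← pow_add, ← e]
    rw [h, e2]
    ring
  · have hp : ∏ i ∈ Finset.Icc 1 m, (1 - (i : ℝ)/n)
        = ((∏ i ∈ Finset.Icc 1 m, (n - i) : ℕ) : ℝ) / (n:ℝ)^m := by
      rw [Nat.cast_prod]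
      have : (n:ℝ)^m = ∏ i ∈ Finset.Icc 1 m, (n:ℝ) := by simp
      rw [this, ← Finset.prod_div_distrib]
      refine Finset.prod_congr rfl fun i hi => ?_
      have := (Finset.mem_Icc.1 hi).2
      rw [Nat.cast_sub (by omega)]
      field_simp
    rw [hp, div_eq_div_iff (pow_ne_zero _ hn0) (pow_ne_zero _ hn0)]
    have h' : ((goodFns n x (m+1)).card : ℝ) * (n:ℝ)^m
        = (n:ℝ)^n * ((∏ i ∈ Finset.Icc 1 m, (n - i) : ℕ) : ℝ) := by exact_mod_cast h
    rw [h', mul_comm]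
end
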